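/- arXiv:1808.00634 — 2 statements merged into one kernel-verified Lean document; each statement's English description precedes it below -/
import Mathlib

section
/- For every n ≥ 1, every nontrivial normal subgroup N of the Houghton group H_n contains every finitely supported even permutation of {1,…,n} × ℕ; that is, N contains the finitary alternating group on {1,…,n} × ℕ. -/
/-- A map `f : {1,…,n} × ℕ → {1,…,n} × ℕ` is an *eventual translation* if for each
`i` there exist `m_i ∈ ℤ` and `N_i ∈ ℕ` with `f (i, x) = (i, x + m_i)` for all `x ≥ N_i`. -/
def IsEvTrans {n : ℕ} (f : Fin n × ℕ → Fin n × ℕ) : Prop :=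
  ∀ i : Fin n, ∃ m : ℤ, ∃ N : ℕ, ∀ x : ℕ, N ≤ x →
    (f (i, x)).1 = i ∧ ((f (i, x)).2 : ℤ) = (x : ℤ) + m

lemma IsEvTrans.id {n : ℕ} : IsEvTrans (id : Fin n × ℕ → Fin n × ℕ) :=
  fun i => ⟨0, 0, fun x _ => by simp⟩

lemma IsEvTrans.comp {n : ℕ} {f g : Fin n × ℕ → Fin n × ℕ}
    (hf : IsEvTrans f) (hg : IsEvTrans g) : IsEvTrans (f ∘ g) := by
  intro i
  obtain ⟨m₁, N₁, h₁⟩ := hg i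
  obtain ⟨m₂, N₂, h₂⟩ := hf i
  refine ⟨m₁ + m₂, max N₁ ((N₂ : ℤ) - m₁).toNat, fun x hx => ?_⟩
  have hx₁ : N₁ ≤ x := le_trans (le_max_left _ _) hx
  obtain ⟨hg1, hg2⟩ := h₁ x hx₁
  have hgix : g (i, x) = (i, (g (i, x)).2) := Prod.ext hg1 rfl
  have hxa : ((N₂ : ℤ) - m₁).toNat ≤ x := le_trans (le_max_right _ _) hx
  have hxb : (N₂ : ℤ) - m₁ ≤ ((((N₂ : ℤ) - m₁).toNat : ℤ)) := Int.self_le_toNat _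
  have hyN : N₂ ≤ (g (i, x)).2 := by
    have : (N₂ : ℤ) ≤ ((g (i, x)).2 : ℤ) := by omega
    exact_mod_cast this
  obtain ⟨hf1, hf2⟩ := h₂ (g (i, x)).2 hyN
  constructor
  · show (f (g (i, x))).1 = i
    rw [hgix]; exact hf1
  · show ((f (g (i, x))).2 : ℤ) = (x : ℤ) + (m₁ + m₂)
    rw [hgix, hf2, hg2]; ring

lemma IsEvTrans.inv {n : ℕ} {f : Equiv.Perm (Fin n × ℕ)} (hf : IsEvTrans ⇑f) :
    IsEvTrans ⇑f.symm := by
  intro i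
  obtain ⟨m, N, h⟩ := hf i
  refine ⟨-m, ((N : ℤ) + m).toNat, fun y hy => ?_⟩
  have hy' : (N : ℤ) + m ≤ (y : ℤ) :=
    le_trans (Int.self_le_toNat _) (by exact_mod_cast hy)
  set x := ((y : ℤ) - m).toNat with hxdef
  have hx : (x : ℤ) = (y : ℤ) - m := Int.toNat_of_nonneg (by omega)
  have hxN : N ≤ x := by omega
  obtain ⟨h1, h2⟩ := h x hxN
  have hfx : f (i, x) = (i, y) := by
    have h3 : ((f (i, x)).2 : ℤ) = (y : ℤ) := by rw [h2]; omega
    exact Prod.ext h1 (by exact_mod_cast h3)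
  have hsymm : f.symm (i, y) = (i, x) := by rw [← hfx]; exact f.symm_apply_apply _
  rw [hsymm]
  exact ⟨rfl, by omega⟩

/-- The Houghton group `H_n`, as the subgroup of `Equiv.Perm (Fin n × ℕ)` consisting
of the eventual translations. -/
def Houghton (n : ℕ) : Subgroup (Equiv.Perm (Fin n × ℕ)) where
  carrier := {η | IsEvTrans ⇑η}
  one_mem' := IsEvTrans.id
  mul_mem' := fun ha hb => IsEvTrans.comp ha hb
  inv_mem' := fun ha => IsEvTrans.inv ha

/-- The monoid `M_n` of injective eventual translations, as a submonoid of
`Function.End (Fin n × ℕ)` (whose multiplication is composition). -/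
def Mmon (n : ℕ) : Submonoid (Function.End (Fin n × ℕ)) where
  carrier := {f | Function.Injective f ∧ IsEvTrans f}
  one_mem' := ⟨fun _ _ h => h, IsEvTrans.id⟩
  mul_mem' := fun ha hb => ⟨ha.1.comp hb.1, IsEvTrans.comp ha.2 hb.2⟩

open Classical in
/-- `χ_i(f)` : the unique integer `m` such that `f (i, x) = (i, x + m)` for all
sufficiently large `x` (or junk value `0` if no such integer exists). -/
noncomputable def chiF (n : ℕ) (i : Fin n) (f : Fin n × ℕ → Fin n × ℕ) : ℤ :=
  if h : ∃ m : ℤ, ∃ N : ℕ, ∀ x : ℕ, N ≤ x →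
      (f (i, x)).1 = i ∧ ((f (i, x)).2 : ℤ) = (x : ℤ) + m
  then h.choose else 0

/-!
Let `K` be a nontrivial subgroup of `Perm α` normalized by all transpositions. Having even
products of transpositions in `K` amounts to having all transpositions in one coset of `K`. If
`g ∈ K` moves `a`, then a transposition `τ = (a c)` and its conjugate `g τ g⁻¹` lie in one coset,
and conjugating this coincidence by further transpositions spreads it to every transposition; five
points leave enough room for this.
-/

lemma list_prod_mem_of_even_length {M S : Type*} [Monoid M] [SetLike S M] [SubmonoidClass S M]
    {s : S} : ∀ {l : List M}, (∀ x ∈ l, ∀ y ∈ l, x * y ∈ s) → Even l.length → l.prod ∈ s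
  | [], _, _ => by simp only [List.prod_nil, one_mem]
  | [_], _, heven => by simp at heven
  | x :: y :: l, hmul, heven => by
    have hl : l.prod ∈ s := list_prod_mem_of_even_length
      (fun a ha b hb => hmul a (by simp [ha]) b (by simp [hb]))
      (by simpa [Nat.even_add_one] using heven)
    rw [List.prod_cons, List.prod_cons, ← mul_assoc]
    exact mul_mem (hmul x (by simp) y (by simp)) hl

section Normalizer

variable {G : Type*} [Group G] {K : Subgroup G} {g σ τ π : G}

lemma mk_conj_eq_mk (hg : g ∈ K) (hτ : τ ∈ Subgroup.normalizer (K : Set G)) :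
    ((g * τ * g⁻¹ : G) : G ⧸ K) = τ := by
  rw [QuotientGroup.mk_mul_of_mem _ (inv_mem hg), eq_comm, QuotientGroup.eq, ← mul_assoc]
  exact (Subgroup.mem_normalizer_iff''.1 hτ g).1 hg

lemma mk_conj_eq_mk_conj (hπ : π ∈ Subgroup.normalizer (K : Set G)) (h : (σ : G ⧸ K) = τ) :
    ((π * σ * π⁻¹ : G) : G ⧸ K) = (π * τ * π⁻¹ : G) := by
  rw [QuotientGroup.eq] at h ⊢
  have hconj : (π * σ * π⁻¹)⁻¹ * (π * τ * π⁻¹) = π * (σ⁻¹ * τ) * π⁻¹ := by group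
  exact hconj ▸ (Subgroup.mem_normalizer_iff.1 hπ _).1 h

lemma le_normalizer_map_subtype {H : Subgroup G} (N : Subgroup H) [N.Normal] :
    H ≤ Subgroup.normalizer (N.map H.subtype : Set G) := by
  simpa only [Subgroup.normalizer_eq_top, ← MonoidHom.range_eq_map, Subgroup.range_subtype]
    using Subgroup.le_normalizer_map (H := N) H.subtype

end Normalizer

section Transpositions

open Equiv

variable {α : Type*} [DecidableEq α] {K : Subgroup (Perm α)}

lemma mk_swap_apply_eq {π : Perm α} {a b c d : α} (hπ : π ∈ Subgroup.normalizer (K : Set (Perm α)))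
    (h : (swap a b : Perm α ⧸ K) = swap c d) :
    (swap (π a) (π b) : Perm α ⧸ K) = swap (π c) (π d) := by
  simpa only [swap_apply_apply] using mk_conj_eq_mk_conj hπ h

lemma exists_mk_swap_eq_mk_swap (hα : 5 ≤ ENat.card α)
    (hK : ∀ a b, swap a b ∈ Subgroup.normalizer (K : Set (Perm α))) (hne : K ≠ ⊥) :
    ∃ a b c : α, b ≠ a ∧ c ≠ a ∧ b ≠ c ∧ (swap a b : Perm α ⧸ K) = swap a c := by
  obtain ⟨g, hg, hg_ne⟩ := K.bot_or_exists_ne_one.resolve_left hne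
  obtain ⟨a, hga⟩ : ∃ a, g a ≠ a := by
    simpa only [ne_eq, Perm.ext_iff, Perm.one_apply, not_forall] using hg_ne
  obtain ⟨c, hca, hcga⟩ := ENat.exists_ne_ne_of_three_le (le_trans (by norm_num) hα) a (g a)
  have hgac : (swap (g a) (g c) : Perm α ⧸ K) = swap a c := by
    rw [swap_apply_apply]
    exact mk_conj_eq_mk hg (hK a c)
  by_cases hgc : g c = c
  · refine ⟨c, g a, a, hcga.symm, hca.symm, hga, ?_⟩
    rwa [hgc, swap_comm (g a), swap_comm a] at hgac
  · obtain ⟨t, ht⟩ := Finset.exists_not_mem_of_card_lt_enatCard (s := {a, c, g a, g c})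
      (lt_of_le_of_lt (Nat.cast_le.2 Finset.card_le_four) (lt_of_lt_of_le (by norm_num) hα))
    simp only [Finset.mem_insert, Finset.mem_singleton, not_or, ← ne_eq] at ht
    obtain ⟨hta, htc, htga, htgc⟩ := ht
    have hgat : (swap (g a) (g c) : Perm α ⧸ K) = swap a t := by
      simpa only [swap_apply_left, swap_apply_of_ne_of_ne hcga.symm htga.symm,
        swap_apply_of_ne_of_ne hgc htgc.symm, swap_apply_of_ne_of_ne hca.symm hta.symm]
        using mk_swap_apply_eq (hK c t) hgac
    exact ⟨a, c, t, hca, hta, htc.symm, hgac.symm.trans hgat⟩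

lemma mk_swap_eq_mk_swap_of_common_left
    (hK : ∀ a b, swap a b ∈ Subgroup.normalizer (K : Set (Perm α))) {a b c : α} (hba : b ≠ a)
    (hca : c ≠ a) (hbc : b ≠ c) (h : (swap a b : Perm α ⧸ K) = swap a c) {p x y : α}
    (hx : x ≠ p) (hy : y ≠ p) : (swap p x : Perm α ⧸ K) = swap p y := by
  have eq_mk_swap {z : α} (hz : z ≠ a) : (swap a b : Perm α ⧸ K) = swap a z := by
    obtain rfl | hzb := eq_or_ne z b
    · rfl
    · simpa only [swap_apply_left, swap_apply_of_ne_of_ne hca.symm hz.symm,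
        swap_apply_of_ne_of_ne hbc hzb.symm] using mk_swap_apply_eq (hK c z) h
  have swap_ne {z : α} (hz : z ≠ p) : swap a p z ≠ a := by
    rwa [Ne, swap_apply_eq_iff, swap_apply_left]
  have hxy : (swap a (swap a p x) : Perm α ⧸ K) = swap a (swap a p y) :=
    (eq_mk_swap (swap_ne hx)).symm.trans (eq_mk_swap (swap_ne hy))
  simpa only [swap_apply_left, swap_apply_self] using mk_swap_apply_eq (hK a p) hxy

lemma mk_eq_mk_of_isSwap (hα : 5 ≤ ENat.card α)
    (hK : ∀ a b, swap a b ∈ Subgroup.normalizer (K : Set (Perm α))) (hne : K ≠ ⊥) {σ τ : Perm α}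
    (hσ : σ.IsSwap) (hτ : τ.IsSwap) : (σ : Perm α ⧸ K) = τ := by
  obtain ⟨a, b, c, hba, hca, hbc, h⟩ := exists_mk_swap_eq_mk_swap hα hK hne
  have common_left {p x y : α} (hx : x ≠ p) (hy : y ≠ p) :
      (swap p x : Perm α ⧸ K) = swap p y :=
    mk_swap_eq_mk_swap_of_common_left hK hba hca hbc h hx hy
  obtain ⟨x, y, hxy, rfl⟩ := hσ
  obtain ⟨z, w, hzw, rfl⟩ := hτ
  obtain rfl | hxz := eq_or_ne x z
  · exact common_left hxy.symm hzw.symm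
  · calc (swap x y : Perm α ⧸ K) = swap x z := common_left hxy.symm hxz.symm
      _ = swap z x := by rw [swap_comm]
      _ = swap z w := common_left hxz hzw.symm

theorem normal_subgroup_contains_finitary_alternating_general (hα : 5 ≤ ENat.card α)
    {H : Subgroup (Perm α)} (hH : ∀ a b, swap a b ∈ H) (N : Subgroup H) (hN : N.Normal)
    (hnt : N ≠ ⊥) (σ : Perm α)
    (heven : ∃ l : List (Perm α), (∀ τ ∈ l, τ.IsSwap) ∧ l.prod = σ ∧ Even l.length) :
    ∃ hσ : σ ∈ H, (⟨σ, hσ⟩ : H) ∈ N := by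
  have hK (a b : α) : swap a b ∈ Subgroup.normalizer (N.map H.subtype : Set (Perm α)) :=
    le_normalizer_map_subtype N (hH a b)
  have hne : N.map H.subtype ≠ ⊥ := by
    rwa [Ne, Subgroup.map_eq_bot_iff_of_injective _ H.subtype_injective]
  obtain ⟨l, hl, rfl, hlen⟩ := heven
  have hmul (σ) (hσ : σ ∈ l) (τ) (hτ : τ ∈ l) : σ * τ ∈ N.map H.subtype := by
    have hmk := QuotientGroup.eq.1 (mk_eq_mk_of_isSwap hα hK hne (hl σ hσ) (hl τ hτ))
    obtain ⟨x, y, -, rfl⟩ := hl σ hσ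
    rwa [swap_inv] at hmk
  simpa only [Subgroup.mem_map, Subgroup.subtype_apply, Subtype.exists, exists_and_right,
    exists_eq_right] using list_prod_mem_of_even_length hmul hlen

end Transpositions

lemma swap_mem_houghton {n : ℕ} (a b : Fin n × ℕ) : Equiv.swap a b ∈ Houghton n := by
  refine fun i => ⟨0, a.2 + b.2 + 1, fun x hx => ?_⟩
  have hxa : (i, x) ≠ a := by
    rintro rfl
    omega
  have hxb : (i, x) ≠ b := by
    rintro rfl
    omega
  simp [Equiv.swap_apply_of_ne_of_ne hxa hxb]

/-- Every nontrivial normal subgroup of `H_n` contains every finitely supported even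
permutation of `{1,…,n} × ℕ`, i.e. it contains the finitary alternating group. -/
theorem normal_subgroup_contains_finitary_alternating (n : ℕ) (hn : 1 ≤ n)
    (N : Subgroup ↥(Houghton n)) (hN : N.Normal) (hnt : N ≠ ⊥)
    (σ : Equiv.Perm (Fin n × ℕ)) (hfin : {p : Fin n × ℕ | σ p ≠ p}.Finite)
    (heven : ∃ l : List (Equiv.Perm (Fin n × ℕ)),
      (∀ τ ∈ l, ∃ a b : Fin n × ℕ, a ≠ b ∧ τ = Equiv.swap a b) ∧
      l.prod = σ ∧ Even l.length) :
    ∃ hσ : σ ∈ Houghton n, (⟨σ, hσ⟩ : ↥(Houghton n)) ∈ N := by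
  have : Nonempty (Fin n) := ⟨⟨0, hn⟩⟩
  exact normal_subgroup_contains_finitary_alternating_general
    (by simp only [ENat.card_eq_top_of_infinite, le_top]) swap_mem_houghton N hN hnt σ heven
end

section
/- For every n ≥ 3, the commutator subgroup [H_n, H_n] of the Houghton group H_n equals the subgroup of all finitely supported permutations of {1,…,n} × ℕ (the finitary symmetric group on {1,…,n} × ℕ). -/
/-!
Every element of `H_n` translates the far end of each ray, and recording the `n` translation lengths
gives a homomorphism from `H_n` to the abelian group `ℤⁿ`. Commutators therefore lie in its kernel,
which consists of the finitely supported permutations because there are only finitely many rays.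

Conversely, choose three rays `i`, `j`, `k`. The shift that moves ray `i` towards the origin and
continues outwards along ray `j`, and the analogous shift from `i` to `k`, have as their commutator
the transposition of the origins of `j` and `k`. As `[H_n, H_n]` is normalized by all
transpositions, it then contains all of them, and they generate the finitary symmetric group.
-/

section FinitarySymmetric

open Equiv

variable {α : Type*} [DecidableEq α]

theorem closure_isSwap_le_of_le_normalizer {K : Subgroup (Perm α)}
    (hK : Subgroup.closure {σ : Perm α | σ.IsSwap} ≤ Subgroup.normalizer (K : Set (Perm α)))
    {a b : α} (hab : a ≠ b) (h : swap a b ∈ K) :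
    Subgroup.closure {σ : Perm α | σ.IsSwap} ≤ K := by
  have swap_left_mem (c : α) : swap a c ∈ K := by
    rcases eq_or_ne b c with rfl | hbc
    · exact h
    rcases eq_or_ne a c with rfl | hac
    · exact swap_self a ▸ one_mem K
    have conj_mem : swap b c * swap a b * (swap b c)⁻¹ ∈ K :=
      Subgroup.le_normalizer_iff.mp hK _ (Subgroup.subset_closure ⟨b, c, hbc, rfl⟩) _ h
    rwa [← swap_apply_apply, swap_apply_of_ne_of_ne hab hac, swap_apply_left] at conj_mem
  rw [Subgroup.closure_le]
  rintro _ ⟨c, d, -, rfl⟩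
  exact SubmonoidClass.swap_mem_trans K (swap_comm a c ▸ swap_left_mem c) (swap_left_mem d)

theorem closure_isSwap_le_commutator {H : Subgroup (Perm α)}
    (hH : Subgroup.closure {σ : Perm α | σ.IsSwap} ≤ H)
    {a b : α} (hab : a ≠ b) (h : swap a b ∈ ⁅H, H⁆) :
    Subgroup.closure {σ : Perm α | σ.IsSwap} ≤ ⁅H, H⁆ := by
  have le_normalizer : H ≤ Subgroup.normalizer ((⁅H, H⁆ : Subgroup (Perm α)) : Set (Perm α)) :=
    Subgroup.le_normalizer_iff_commutator_le_left.mpr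
      (Subgroup.commutator_mono H.commutator_le_self le_rfl)
  exact closure_isSwap_le_of_le_normalizer (hH.trans le_normalizer) hab h

end FinitarySymmetric

section Translation

open Filter

variable {ι : Type*} {f g : ι × ℕ → ι × ℕ} {i : ι} {a b : ℤ}

/-- `TranslatesRay f i m` says that `f` is translation by `m` on a terminal segment of the ray
`{i} × ℕ`. Elements of the Houghton groups do this on every ray, with `m` depending on the ray. -/
def TranslatesRay (f : ι × ℕ → ι × ℕ) (i : ι) (m : ℤ) : Prop :=
  ∀ᶠ x : ℕ in atTop, (f (i, x)).1 = i ∧ ((f (i, x)).2 : ℤ) = x + m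

theorem TranslatesRay.unique (ha : TranslatesRay f i a) (hb : TranslatesRay f i b) : a = b := by
  obtain ⟨x, ⟨-, hxa⟩, -, hxb⟩ := (ha.and hb).exists
  lia

theorem TranslatesRay.tendsto_snd (hf : TranslatesRay f i a) :
    Tendsto (fun x ↦ (f (i, x)).2) atTop atTop := by
  have tendsto_add : Tendsto (fun x : ℕ ↦ (x : ℤ) + a) atTop atTop :=
    tendsto_atTop_add_const_right _ a tendsto_natCast_atTop_atTop
  exact tendsto_natCast_atTop_iff.mp (tendsto_add.congr' (hf.mono fun _ hx ↦ hx.2.symm))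

theorem TranslatesRay.comp (hf : TranslatesRay f i a) (hg : TranslatesRay g i b) :
    TranslatesRay (f ∘ g) i (a + b) := by
  filter_upwards [hg, hg.tendsto_snd.eventually hf] with x ⟨hg₁, hg₂⟩ ⟨hf₁, hf₂⟩
  have hgx : g (i, x) = (i, (g (i, x)).2) := Prod.ext hg₁ rfl
  rw [← hgx] at hf₁ hf₂
  exact ⟨hf₁, by rw [Function.comp_apply, hf₂, hg₂]; ring⟩

theorem translatesRay_zero_iff : TranslatesRay f i 0 ↔ ∀ᶠ x in atTop, f (i, x) = (i, x) := by
  simp [TranslatesRay, Prod.ext_iff]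

theorem eventually_cofinite_prod_nat_iff [Finite ι] {P : ι × ℕ → Prop} :
    (∀ᶠ p in cofinite, P p) ↔ ∀ i, ∀ᶠ x in atTop, P (i, x) := by
  simp only [← Nat.cofinite_eq_atTop]
  refine ⟨fun h i ↦ (Prod.mk_right_injective i).tendsto_cofinite.eventually h, fun h ↦ ?_⟩
  simp only [eventually_cofinite] at h ⊢
  refine (Set.finite_iUnion fun i ↦ (h i).image (Prod.mk i)).subset ?_
  rintro ⟨i, x⟩ hx
  exact Set.mem_iUnion_of_mem i ⟨x, hx, rfl⟩

theorem finite_setOf_apply_ne_iff_translatesRay_zero [Finite ι] :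
    {p | f p ≠ p}.Finite ↔ ∀ i, TranslatesRay f i 0 := by
  simp only [translatesRay_zero_iff]
  exact eventually_cofinite.symm.trans eventually_cofinite_prod_nat_iff

end Translation

section TranslationLength

variable {n : ℕ} {f g : Fin n × ℕ → Fin n × ℕ}

theorem isEvTrans_iff : IsEvTrans f ↔ ∀ i, ∃ m, TranslatesRay f i m := by
  simp only [IsEvTrans, TranslatesRay, Filter.eventually_atTop]

theorem IsEvTrans.translatesRay_chiF (hf : IsEvTrans f) (i : Fin n) :
    TranslatesRay f i (chiF n i f) := by
  rw [chiF, dif_pos (hf i)]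
  exact Filter.eventually_atTop.mpr (hf i).choose_spec

theorem IsEvTrans.chiF_eq_iff (hf : IsEvTrans f) {i : Fin n} {m : ℤ} :
    chiF n i f = m ↔ TranslatesRay f i m :=
  ⟨fun h ↦ h ▸ hf.translatesRay_chiF i, (hf.translatesRay_chiF i).unique⟩

theorem IsEvTrans.chiF_comp (hf : IsEvTrans f) (hg : IsEvTrans g) (i : Fin n) :
    chiF n i (f ∘ g) = chiF n i f + chiF n i g :=
  (hf.comp hg).chiF_eq_iff.mpr ((hf.translatesRay_chiF i).comp (hg.translatesRay_chiF i))

/-- The homomorphism `H_n → ℤⁿ` whose `i`-th coordinate is the translation length `χ_i`. -/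
noncomputable def translationHom (n : ℕ) : Houghton n →* Multiplicative (Fin n → ℤ) :=
  MonoidHom.mk' (fun η ↦ .ofAdd fun i ↦ chiF n i (η : Equiv.Perm (Fin n × ℕ)))
    fun η θ ↦ congrArg Multiplicative.ofAdd (funext (η.2.chiF_comp θ.2))

theorem mem_ker_translationHom {η : Houghton n} :
    η ∈ (translationHom n).ker ↔ {p | (η : Equiv.Perm (Fin n × ℕ)) p ≠ p}.Finite :=
  calc
    η ∈ (translationHom n).ker ↔ ∀ i, chiF n i (η : Equiv.Perm (Fin n × ℕ)) = 0 :=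
      ofAdd_eq_one.trans funext_iff
    _ ↔ ∀ i, TranslatesRay (η : Equiv.Perm (Fin n × ℕ)) i 0 :=
      forall_congr' fun _ ↦ η.2.chiF_eq_iff
    _ ↔ _ := finite_setOf_apply_ne_iff_translatesRay_zero.symm

theorem closure_isSwap_le_houghton (n : ℕ) :
    Subgroup.closure {σ : Equiv.Perm (Fin n × ℕ) | σ.IsSwap} ≤ Houghton n := fun _ hσ ↦
  isEvTrans_iff.mpr fun i ↦
    ⟨0, finite_setOf_apply_ne_iff_translatesRay_zero.mp (mem_closure_isSwap'.mp hσ) i⟩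

end TranslationLength

section RayShift

open Equiv
open scoped commutatorElement

variable {ι : Type*} [DecidableEq ι] {i j k : ι}

/-- The map that regards the rays `{i} × ℕ` and `{j} × ℕ` as the two halves of a line, joined at
their origins, and moves every point of this line one step away from the end of `i` and towards the
end of `j`. Other rays are fixed. -/
def rayShiftFun (i j : ι) (p : ι × ℕ) : ι × ℕ :=
  if p.1 = i then if p.2 = 0 then (j, 0) else (i, p.2 - 1)
  else if p.1 = j then (j, p.2 + 1)
  else p

theorem leftInverse_rayShiftFun (hij : i ≠ j) :
    Function.LeftInverse (rayShiftFun j i) (rayShiftFun i j) := by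
  grind [rayShiftFun, Function.LeftInverse]

/-- The map `rayShiftFun i j` as a permutation; its inverse is the shift in the other direction. -/
def rayShift (hij : i ≠ j) : Perm (ι × ℕ) where
  toFun := rayShiftFun i j
  invFun := rayShiftFun j i
  left_inv := leftInverse_rayShiftFun hij
  right_inv := leftInverse_rayShiftFun hij.symm

theorem rayShift_apply_left_zero (hij : i ≠ j) : rayShift hij (i, 0) = (j, 0) := by
  simp [rayShift, rayShiftFun]

theorem rayShift_apply_left_succ (hij : i ≠ j) (x : ℕ) : rayShift hij (i, x + 1) = (i, x) := by
  simp [rayShift, rayShiftFun]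

theorem rayShift_apply_right (hij : i ≠ j) (x : ℕ) : rayShift hij (j, x) = (j, x + 1) := by
  simp [rayShift, rayShiftFun, hij.symm]

theorem rayShift_apply_of_ne_of_ne (hij : i ≠ j) {a : ι} (hai : a ≠ i) (haj : a ≠ j) (x : ℕ) :
    rayShift hij (a, x) = (a, x) := by
  simp [rayShift, rayShiftFun, hai, haj]

-- Performed in either order, the two shifts agree except that `(i, 0)` and `(i, 1)` are sent to
-- `(k, 0)` and `(j, 0)` in one order and to `(j, 0)` and `(k, 0)` in the other.
theorem commutatorElement_rayShift (hij : i ≠ j) (hik : i ≠ k) (hjk : j ≠ k) :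
    ⁅rayShift hij, rayShift hik⁆ = swap (j, 0) (k, 0) := by
  suffices rayShift hij * rayShift hik = swap (j, 0) (k, 0) * (rayShift hik * rayShift hij) by
    rw [commutatorElement_def, mul_assoc, ← mul_inv_rev, mul_inv_eq_iff_eq_mul, this]
  ext1 ⟨a, x⟩
  simp only [Perm.mul_apply]
  rcases eq_or_ne a i with rfl | hai
  · obtain _ | _ | x := x <;>
      grind [rayShift_apply_left_zero, rayShift_apply_left_succ, rayShift_apply_right,
        rayShift_apply_of_ne_of_ne]
  rcases eq_or_ne a j with rfl | haj
  · grind [rayShift_apply_right, rayShift_apply_of_ne_of_ne]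
  rcases eq_or_ne a k with rfl | hak
  · grind [rayShift_apply_right, rayShift_apply_of_ne_of_ne]
  · grind [rayShift_apply_of_ne_of_ne]

theorem rayShift_mem_houghton {n : ℕ} {i j : Fin n} (hij : i ≠ j) :
    rayShift hij ∈ Houghton n := by
  refine isEvTrans_iff.mpr fun a ↦ ?_
  rcases eq_or_ne a i with rfl | hai
  · refine ⟨-1, (Filter.eventually_ge_atTop 1).mono fun x hx ↦ ?_⟩
    obtain ⟨x, rfl⟩ := Nat.exists_eq_add_of_le' hx
    simp [rayShift_apply_left_succ]
  rcases eq_or_ne a j with rfl | haj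
  · exact ⟨1, .of_forall fun x ↦ by simp [rayShift_apply_right]⟩
  · exact ⟨0, .of_forall fun x ↦ by simp [rayShift_apply_of_ne_of_ne hij hai haj]⟩

theorem swap_mem_commutator_houghton {n : ℕ} {i j k : Fin n} (hij : i ≠ j) (hik : i ≠ k)
    (hjk : j ≠ k) : swap (j, 0) (k, 0) ∈ ⁅Houghton n, Houghton n⁆ :=
  commutatorElement_rayShift hij hik hjk ▸
    Subgroup.commutator_mem_commutator (rayShift_mem_houghton hij) (rayShift_mem_houghton hik)

end RayShift

/-- For every `n ≥ 3`, the commutator subgroup of `H_n` consists exactly of the finitely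
supported permutations of `{1,…,n} × ℕ`. -/
theorem commutator_eq_finitary_symmetric (n : ℕ) (hn : 3 ≤ n) (η : ↥(Houghton n)) :
    η ∈ commutator ↥(Houghton n) ↔
      {p : Fin n × ℕ | (η : Equiv.Perm (Fin n × ℕ)) p ≠ p}.Finite := by
  constructor
  · exact fun hη ↦ mem_ker_translationHom.mp (Abelianization.commutator_subset_ker _ hη)
  · intro hη
    obtain ⟨i, j, k, hij, hik, hjk⟩ : ∃ i j k : Fin n, i ≠ j ∧ i ≠ k ∧ j ≠ k :=
      Fintype.two_lt_card_iff.mp (by rwa [Fintype.card_fin])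
    have swap_mem : Equiv.swap (j, 0) (k, 0) ∈ ⁅Houghton n, Houghton n⁆ :=
      swap_mem_commutator_houghton hij hik hjk
    have closure_le : Subgroup.closure {σ : Equiv.Perm (Fin n × ℕ) | σ.IsSwap} ≤
        ⁅Houghton n, Houghton n⁆ :=
      closure_isSwap_le_commutator (closure_isSwap_le_houghton n) (by simpa using hjk) swap_mem
    rw [← (Houghton n).map_subtype_commutator] at closure_le
    exact (Subgroup.mem_map_iff_mem (Houghton n).subtype_injective).mp
      (closure_le (mem_closure_isSwap'.mpr hη))
end
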